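/- Let (A,C)_ψ be an entwining structure with ψ bijective and let q ∈ k be nonzero. Define R on A⊗A by R(a⊗b) = q⁻¹ab⊗1 + q·1⊗ab − q⁻¹a⊗b, R' on C⊗C by R'(c⊗d) = q⁻¹ε(c)Δ(d) + qε(d)Δ(c) − q⁻¹c⊗d, and R⊕_ψR' on (A⊕C)⊗(A⊕C) by restricting to R on A⊗A, to R' on C⊗C, to ψ⁻¹ on A⊗C, and to ψ + (q − q⁻¹)·id on C⊗A. Then R⊕_ψR' satisfies the braid equation and the Hecke relation (R⊕_ψR' + q⁻¹)(R⊕_ψR' − q) = 0, i.e., it is a q-Hecke operator. -/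

import Mathlib

open TensorProduct LinearMap


/-- `ψ : C ⊗ A → A ⊗ C` is an entwining map, i.e. `(A, C)_ψ` is an entwining structure:
(1) `ψ∘(id_C⊗μ) = (μ⊗id_C)∘(id_A⊗ψ)∘(ψ⊗id_A)`;
(2) `(id_A⊗Δ)∘ψ = (ψ⊗id_C)∘(id_C⊗ψ)∘(Δ⊗id_A)`;
(3) `ψ(c⊗1) = 1⊗c`; (4) `(id_A⊗ε)∘ψ = ε⊗id_A`. -/
def IsEntwining (k : Type*) {A C : Type*} [Field k] [Ring A] [Algebra k A]
    [AddCommGroup C] [Module k C] [Coalgebra k C]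
    (ψ : C ⊗[k] A →ₗ[k] A ⊗[k] C) : Prop :=
  (∀ (c : C) (a b : A),
    ψ (c ⊗ₜ[k] (a * b)) =
      (LinearMap.mul' k A).rTensor C
        ((TensorProduct.assoc k A A C).symm
          (ψ.lTensor A ((TensorProduct.assoc k A C A)
            (ψ.rTensor A ((c ⊗ₜ[k] a) ⊗ₜ[k] b)))))) ∧
  (∀ (c : C) (a : A),
    (Coalgebra.comul (R := k) (A := C)).lTensor A (ψ (c ⊗ₜ[k] a)) =
      (TensorProduct.assoc k A C C)
        (ψ.rTensor C ((TensorProduct.assoc k C A C).symm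
          (ψ.lTensor C ((TensorProduct.assoc k C C A)
            ((Coalgebra.comul (R := k) (A := C)).rTensor A (c ⊗ₜ[k] a))))))) ∧
  (∀ c : C, ψ (c ⊗ₜ[k] (1 : A)) = (1 : A) ⊗ₜ[k] c) ∧
  (∀ (c : C) (a : A),
    (Coalgebra.counit (R := k) (A := C)).lTensor A (ψ (c ⊗ₜ[k] a)) =
      a ⊗ₜ[k] Coalgebra.counit (R := k) c)

/-!
The operator `T = R ⊕_ψ R'` satisfies `T² = (q - q⁻¹) T + 1` because `R` and `R'` do: both have the
form `s ∘ e - q⁻¹` with `e ∘ s = q + q⁻¹`. For endomorphisms `x`, `y` subject to such a quadratic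
relation the subspace on which `xyx = yxy` is stable under `x` and `y`. Since `T` carries `A ⊗ C`
isomorphically onto `C ⊗ A`, the braid equation on the six mixed blocks of `(A ⊕ C)^⊗3` therefore
reduces to the blocks `A ⊗ A ⊗ C` and `A ⊗ C ⊗ C`, where it says that `ψ` intertwines the two copies
of `R`, respectively of `R'`. The entwining axioms say that `ψ` intertwines the maps `e` and `s`.
-/

section TensorAssoc

variable {k X Y Z X' Y' Z' X'' Y'' P Q P' Q' : Type*} [CommRing k]
  [AddCommGroup X] [Module k X] [AddCommGroup Y] [Module k Y] [AddCommGroup Z] [Module k Z]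
  [AddCommGroup X'] [Module k X'] [AddCommGroup Y'] [Module k Y'] [AddCommGroup Z'] [Module k Z']
  [AddCommGroup X''] [Module k X''] [AddCommGroup Y''] [Module k Y'']
  [AddCommGroup P] [Module k P] [AddCommGroup Q] [Module k Q]
  [AddCommGroup P'] [Module k P'] [AddCommGroup Q'] [Module k Q']

variable (Z) in
/-- The operator `f₁₂ = f ⊗ id_Z` on triple tensor products bracketed to the right. The companion
`f₂₃` is `LinearMap.lTensor`. -/
def rTensorAssoc (f : X ⊗[k] Y →ₗ[k] X' ⊗[k] Y') : X ⊗[k] (Y ⊗[k] Z) →ₗ[k] X' ⊗[k] (Y' ⊗[k] Z) :=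
  (TensorProduct.assoc k X' Y' Z).toLinearMap ∘ₗ f.rTensor Z ∘ₗ
    (TensorProduct.assoc k X Y Z).symm.toLinearMap

@[simp]
theorem rTensorAssoc_tmul (f : X ⊗[k] Y →ₗ[k] X' ⊗[k] Y') (x : X) (y : Y) (z : Z) :
    rTensorAssoc Z f (x ⊗ₜ (y ⊗ₜ z)) = TensorProduct.assoc k X' Y' Z (f (x ⊗ₜ y) ⊗ₜ z) := by
  simp [rTensorAssoc]

@[simp]
theorem rTensorAssoc_assoc_tmul (f : X ⊗[k] Y →ₗ[k] X' ⊗[k] Y') (t : X ⊗[k] Y) (z : Z) :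
    rTensorAssoc Z f (TensorProduct.assoc k X Y Z (t ⊗ₜ z)) =
      TensorProduct.assoc k X' Y' Z (f t ⊗ₜ z) := by
  simp [rTensorAssoc]

theorem rTensorAssoc_comp (g : X' ⊗[k] Y' →ₗ[k] X'' ⊗[k] Y'') (f : X ⊗[k] Y →ₗ[k] X' ⊗[k] Y') :
    rTensorAssoc Z (g ∘ₗ f) = rTensorAssoc Z g ∘ₗ rTensorAssoc Z f := by
  ext; simp [rTensorAssoc]

theorem rTensorAssoc_id :
    rTensorAssoc Z (LinearMap.id : X ⊗[k] Y →ₗ[k] X ⊗[k] Y) = LinearMap.id := by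
  ext; simp

theorem rTensorAssoc_add (f g : X ⊗[k] Y →ₗ[k] X' ⊗[k] Y') :
    rTensorAssoc Z (f + g) = rTensorAssoc Z f + rTensorAssoc Z g := by
  ext; simp [add_tmul]

theorem rTensorAssoc_smul (r : k) (f : X ⊗[k] Y →ₗ[k] X' ⊗[k] Y') :
    rTensorAssoc Z (r • f) = r • rTensorAssoc Z f := by
  ext; simp [← smul_tmul']

theorem rTensorAssoc_surjective {f : X ⊗[k] Y →ₗ[k] X' ⊗[k] Y'} (hf : Function.Surjective f) :
    Function.Surjective (rTensorAssoc Z f) :=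
  (TensorProduct.assoc k X' Y' Z).surjective.comp <|
    (f.rTensor_surjective Z hf).comp (TensorProduct.assoc k X Y Z).symm.surjective

theorem eq_rTensorAssoc {f : X ⊗[k] Y →ₗ[k] X' ⊗[k] Y'}
    {g : X ⊗[k] (Y ⊗[k] Z) →ₗ[k] X' ⊗[k] (Y' ⊗[k] Z)}
    (hg : ∀ x y z, g (x ⊗ₜ (y ⊗ₜ z)) = ((mk k Y' Z).flip z).lTensor X' (f (x ⊗ₜ y))) :
    g = rTensorAssoc Z f := by
  have hassoc (z : Z) : ((mk k Y' Z).flip z).lTensor X' =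
      (TensorProduct.assoc k X' Y' Z).toLinearMap ∘ₗ (mk k (X' ⊗[k] Y') Z).flip z := by
    ext; simp
  ext x y z
  simp [hg, hassoc]

theorem rTensorAssoc_comp_map {f : X ⊗[k] Y →ₗ[k] X' ⊗[k] Y'} {g : P ⊗[k] Q →ₗ[k] P' ⊗[k] Q'}
    {a : X →ₗ[k] P} {b : Y →ₗ[k] Q} {a' : X' →ₗ[k] P'} {b' : Y' →ₗ[k] Q'}
    (h : g ∘ₗ TensorProduct.map a b = TensorProduct.map a' b' ∘ₗ f) (c : Z →ₗ[k] Z') :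
    rTensorAssoc Z' g ∘ₗ TensorProduct.map a (TensorProduct.map b c) =
      TensorProduct.map a' (TensorProduct.map b' c) ∘ₗ rTensorAssoc Z f := by
  ext x y z
  have hxy : g (a x ⊗ₜ b y) = TensorProduct.map a' b' (f (x ⊗ₜ y)) := by
    simpa using congr($h (x ⊗ₜ y))
  simp [hxy, map_map_assoc]

theorem lTensor_comp_map_map {f : X ⊗[k] Y →ₗ[k] X' ⊗[k] Y'} {g : P ⊗[k] Q →ₗ[k] P' ⊗[k] Q'}
    {a : X →ₗ[k] P} {b : Y →ₗ[k] Q} {a' : X' →ₗ[k] P'} {b' : Y' →ₗ[k] Q'}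
    (h : g ∘ₗ TensorProduct.map a b = TensorProduct.map a' b' ∘ₗ f) (c : Z →ₗ[k] Z') :
    g.lTensor Z' ∘ₗ TensorProduct.map c (TensorProduct.map a b) =
      TensorProduct.map c (TensorProduct.map a' b') ∘ₗ f.lTensor Z := by
  rw [lTensor_comp_map, h, map_comp_lTensor]

theorem lTensor_rid_comp_rTensorAssoc (f : X ⊗[k] Y →ₗ[k] X' ⊗[k] Y') (φ : Z →ₗ[k] k) :
    ((TensorProduct.rid k Y').toLinearMap ∘ₗ φ.lTensor Y').lTensor X' ∘ₗ rTensorAssoc Z f =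
      f ∘ₗ ((TensorProduct.rid k Y).toLinearMap ∘ₗ φ.lTensor Y).lTensor X := by
  have hassoc (t : X' ⊗[k] Y') (z : Z) :
      ((TensorProduct.rid k Y').toLinearMap ∘ₗ φ.lTensor Y').lTensor X'
        (TensorProduct.assoc k X' Y' Z (t ⊗ₜ z)) = φ z • t := by
    induction t with
    | zero => simp
    | tmul x y => simp
    | add t u ht hu => simp only [map_add, add_tmul, ht, hu, smul_add]
  ext x y z
  simp [hassoc]

end TensorAssoc

section HeckeOperator

variable {k M N V : Type*} [CommRing k] [AddCommGroup M] [Module k M] [AddCommGroup N] [Module k N]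
  [AddCommGroup V] [Module k V]

/-- The braid equation `T₁₂ T₂₃ T₁₂ = T₂₃ T₁₂ T₂₃` on `V ⊗ V ⊗ V`. -/
def IsBraided (T : V ⊗[k] V →ₗ[k] V ⊗[k] V) : Prop :=
  rTensorAssoc V T ∘ₗ T.lTensor V ∘ₗ rTensorAssoc V T =
    T.lTensor V ∘ₗ rTensorAssoc V T ∘ₗ T.lTensor V

/-- `T` is a `q`-Hecke operator: an invertible solution of the braid equation with
`(T + q⁻¹) (T - q) = 0`. The parameter is a unit of `k`, so that `q⁻¹` makes sense over a ring. -/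
def IsHeckeOperator (q : kˣ) (T : V ⊗[k] V →ₗ[k] V ⊗[k] V) : Prop :=
  Function.Bijective T ∧ IsBraided T ∧
    (T + (↑q⁻¹ : k) • LinearMap.id) ∘ₗ (T - (q : k) • LinearMap.id) = 0

theorem bijective_of_comp_self_eq {δ : k} {x : M →ₗ[k] M}
    (hx : x ∘ₗ x = δ • x + LinearMap.id) : Function.Bijective x := by
  have hxx (v : M) : x (x v) = δ • x v + v := congr($hx v)
  refine Function.bijective_iff_has_inverse.mpr ⟨fun v ↦ x v - δ • v, fun v ↦ ?_, fun v ↦ ?_⟩ <;>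
    simp [hxx]

theorem IsHeckeOperator.of_isBraided {q : kˣ} {T : V ⊗[k] V →ₗ[k] V ⊗[k] V} (hT : IsBraided T)
    (hTT : T ∘ₗ T = ((q : k) - ↑q⁻¹) • T + LinearMap.id) : IsHeckeOperator q T := by
  refine ⟨bijective_of_comp_self_eq hTT, hT, ?_⟩
  simp only [add_comp, comp_sub, hTT, smul_comp, comp_smul, id_comp, comp_id]
  match_scalars <;> grind [q.mul_inv]

theorem sub_smul_id_comp_self {q : kˣ} {e : M →ₗ[k] N} {s : N →ₗ[k] M}
    (hes : e ∘ₗ s = ((q : k) + ↑q⁻¹) • LinearMap.id) :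
    (s ∘ₗ e - (↑q⁻¹ : k) • LinearMap.id) ∘ₗ (s ∘ₗ e - (↑q⁻¹ : k) • LinearMap.id) =
      ((q : k) - ↑q⁻¹) • (s ∘ₗ e - (↑q⁻¹ : k) • LinearMap.id) + LinearMap.id := by
  have hese : (s ∘ₗ e) ∘ₗ s ∘ₗ e = ((q : k) + ↑q⁻¹) • s ∘ₗ e := by
    rw [comp_assoc, ← comp_assoc e s e, hes, smul_comp, id_comp, comp_smul]
  simp only [sub_comp, comp_sub, hese, smul_comp, comp_smul, id_comp, comp_id]
  match_scalars <;> grind [q.mul_inv]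

theorem rTensorAssoc_comp_self {δ : k} {x : M ⊗[k] N →ₗ[k] M ⊗[k] N}
    (hx : x ∘ₗ x = δ • x + LinearMap.id) :
    rTensorAssoc V x ∘ₗ rTensorAssoc V x = δ • rTensorAssoc V x + LinearMap.id := by
  rw [← rTensorAssoc_comp, hx, rTensorAssoc_add, rTensorAssoc_smul, rTensorAssoc_id]

theorem lTensor_comp_self {δ : k} {x : M →ₗ[k] M} (hx : x ∘ₗ x = δ • x + LinearMap.id) :
    x.lTensor V ∘ₗ x.lTensor V = δ • x.lTensor V + LinearMap.id := by
  rw [← lTensor_comp, hx, lTensor_add, lTensor_smul, lTensor_id]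

theorem braid_apply_apply {δ : k} {x y : M →ₗ[k] M} (hx : x ∘ₗ x = δ • x + LinearMap.id)
    (hy : y ∘ₗ y = δ • y + LinearMap.id) {v : M} (hv : x (y (x v)) = y (x (y v))) :
    x (y (x (x v))) = y (x (y (x v))) := by
  have hxx (w : M) : x (x w) = δ • x w + w := congr($hx w)
  have hyy (w : M) : y (y w) = δ • y w + w := congr($hy w)
  calc x (y (x (x v))) = δ • x (y (x v)) + x (y v) := by simp only [hxx, map_add, map_smul]
    _ = y (y (x (y v))) := by rw [hyy, hv]
    _ = y (x (y (x v))) := by rw [hv]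

/-- The braid relation spreads along a chain of blocks of `M` on which `y` inverts `f` and `x`
inverts `g`: by `braid_apply_apply` it is enough to check it on the first block, where it amounts to
`f ∘ g` intertwining the restrictions of `x` and `y` to the two ends of the chain. -/
theorem braid_comp_of_chain {P₀ P₁ P₂ : Type*} [AddCommGroup P₀] [Module k P₀] [AddCommGroup P₁]
    [Module k P₁] [AddCommGroup P₂] [Module k P₂] {δ : k} {x y : M →ₗ[k] M} {ι₀ : P₀ →ₗ[k] M}
    {ι₁ : P₁ →ₗ[k] M} {ι₂ : P₂ →ₗ[k] M} {f : P₁ →ₗ[k] P₀} {g : P₂ →ₗ[k] P₁} {r₀ : P₀ →ₗ[k] P₀}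
    {r₂ : P₂ →ₗ[k] P₂} (hx : x ∘ₗ x = δ • x + LinearMap.id) (hy : y ∘ₗ y = δ • y + LinearMap.id)
    (hf : Function.Surjective f) (hg : Function.Surjective g) (hxι₀ : x ∘ₗ ι₀ = ι₀ ∘ₗ r₀)
    (hyf : y ∘ₗ ι₀ ∘ₗ f = ι₁) (hxg : x ∘ₗ ι₁ ∘ₗ g = ι₂) (hyι₂ : y ∘ₗ ι₂ = ι₂ ∘ₗ r₂)
    (hr : r₀ ∘ₗ f ∘ₗ g = f ∘ₗ g ∘ₗ r₂) :
    (x ∘ₗ y ∘ₗ x) ∘ₗ ι₀ = (y ∘ₗ x ∘ₗ y) ∘ₗ ι₀ ∧ (x ∘ₗ y ∘ₗ x) ∘ₗ ι₁ = (y ∘ₗ x ∘ₗ y) ∘ₗ ι₁ ∧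
      (x ∘ₗ y ∘ₗ x) ∘ₗ ι₂ = (y ∘ₗ x ∘ₗ y) ∘ₗ ι₂ := by
  replace hxι₀ (p) : x (ι₀ p) = ι₀ (r₀ p) := congr($hxι₀ p)
  replace hyf (p) : y (ι₀ (f p)) = ι₁ p := congr($hyf p)
  replace hxg (p) : x (ι₁ (g p)) = ι₂ p := congr($hxg p)
  replace hyι₂ (p) : y (ι₂ p) = ι₂ (r₂ p) := congr($hyι₂ p)
  replace hr (p) : r₀ (f (g p)) = f (g (r₂ p)) := congr($hr p)
  have h₀ (p : P₀) : x (y (x (ι₀ p))) = y (x (y (ι₀ p))) := by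
    obtain ⟨p, rfl⟩ := (hf.comp hg) p
    simp only [Function.comp_apply, hxι₀, hr, hyf, hxg, hyι₂]
  have h₁ (p : P₁) : x (y (x (ι₁ p))) = y (x (y (ι₁ p))) := by
    rw [← hyf]
    exact (braid_apply_apply hy hx (h₀ (f p)).symm).symm
  have h₂ (p : P₂) : x (y (x (ι₂ p))) = y (x (y (ι₂ p))) := by
    rw [← hxg]
    exact braid_apply_apply hx hy (h₁ (g p))
  exact ⟨LinearMap.ext h₀, LinearMap.ext h₁, LinearMap.ext h₂⟩

end HeckeOperator

section Glue

variable {k X Y M : Type*} [CommRing k] [AddCommGroup X] [Module k X] [AddCommGroup Y] [Module k Y]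
  [AddCommGroup M] [Module k M]

theorem tensorProduct_prod_hom_ext {f g : (X × Y) ⊗[k] (X × Y) →ₗ[k] M}
    (hXX : f ∘ₗ TensorProduct.map (inl k X Y) (inl k X Y) =
      g ∘ₗ TensorProduct.map (inl k X Y) (inl k X Y))
    (hXY : f ∘ₗ TensorProduct.map (inl k X Y) (inr k X Y) =
      g ∘ₗ TensorProduct.map (inl k X Y) (inr k X Y))
    (hYX : f ∘ₗ TensorProduct.map (inr k X Y) (inl k X Y) =
      g ∘ₗ TensorProduct.map (inr k X Y) (inl k X Y))
    (hYY : f ∘ₗ TensorProduct.map (inr k X Y) (inr k X Y) =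
      g ∘ₗ TensorProduct.map (inr k X Y) (inr k X Y)) : f = g := by
  ext a b
  exacts [congr($hXX (a ⊗ₜ b)), congr($hXY (a ⊗ₜ b)), congr($hYX (a ⊗ₜ b)), congr($hYY (a ⊗ₜ b))]

/-- The operator `R ⊕_ψ R'` on `(X ⊕ Y) ⊗ (X ⊕ Y)` with blocks `R`, `R'`, `ψ⁻¹` and `ψ + δ`; the
case of interest is `δ = q - q⁻¹`. -/
def glue (δ : k) (R : X ⊗[k] X →ₗ[k] X ⊗[k] X) (R' : Y ⊗[k] Y →ₗ[k] Y ⊗[k] Y)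
    (ψ : Y ⊗[k] X ≃ₗ[k] X ⊗[k] Y) : (X × Y) ⊗[k] (X × Y) →ₗ[k] (X × Y) ⊗[k] (X × Y) :=
  TensorProduct.map (inl k X Y) (inl k X Y) ∘ₗ R ∘ₗ TensorProduct.map (fst k X Y) (fst k X Y) +
  TensorProduct.map (inr k X Y) (inr k X Y) ∘ₗ R' ∘ₗ TensorProduct.map (snd k X Y) (snd k X Y) +
  TensorProduct.map (inr k X Y) (inl k X Y) ∘ₗ ψ.symm.toLinearMap ∘ₗ
    TensorProduct.map (fst k X Y) (snd k X Y) +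
  (TensorProduct.map (inl k X Y) (inr k X Y) ∘ₗ ψ.toLinearMap +
    δ • TensorProduct.map (inr k X Y) (inl k X Y)) ∘ₗ TensorProduct.map (snd k X Y) (fst k X Y)

variable {δ : k} {R : X ⊗[k] X →ₗ[k] X ⊗[k] X} {R' : Y ⊗[k] Y →ₗ[k] Y ⊗[k] Y}
  {ψ : Y ⊗[k] X ≃ₗ[k] X ⊗[k] Y}

variable (δ R R' ψ) in
theorem glue_comp_map_inl_inl : glue δ R R' ψ ∘ₗ TensorProduct.map (inl k X Y) (inl k X Y) =
    TensorProduct.map (inl k X Y) (inl k X Y) ∘ₗ R := by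
  ext; simp [glue]

variable (δ R R' ψ) in
theorem glue_comp_map_inr_inr : glue δ R R' ψ ∘ₗ TensorProduct.map (inr k X Y) (inr k X Y) =
    TensorProduct.map (inr k X Y) (inr k X Y) ∘ₗ R' := by
  ext; simp [glue]

variable (δ R R' ψ) in
theorem glue_comp_map_inl_inr : glue δ R R' ψ ∘ₗ TensorProduct.map (inl k X Y) (inr k X Y) =
    TensorProduct.map (inr k X Y) (inl k X Y) ∘ₗ ψ.symm.toLinearMap := by
  ext; simp [glue]

variable (δ R R' ψ) in
theorem glue_comp_map_inr_inl : glue δ R R' ψ ∘ₗ TensorProduct.map (inr k X Y) (inl k X Y) =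
    TensorProduct.map (inl k X Y) (inr k X Y) ∘ₗ ψ.toLinearMap +
      δ • TensorProduct.map (inr k X Y) (inl k X Y) := by
  ext; simp [glue]

theorem eq_glue {T : (X × Y) ⊗[k] (X × Y) →ₗ[k] (X × Y) ⊗[k] (X × Y)}
    (hXX : ∀ a b, T (inl k X Y a ⊗ₜ inl k X Y b) =
      TensorProduct.map (inl k X Y) (inl k X Y) (R (a ⊗ₜ b)))
    (hYY : ∀ c d, T (inr k X Y c ⊗ₜ inr k X Y d) =
      TensorProduct.map (inr k X Y) (inr k X Y) (R' (c ⊗ₜ d)))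
    (hXY : ∀ a c, T (inl k X Y a ⊗ₜ inr k X Y c) =
      TensorProduct.map (inr k X Y) (inl k X Y) (ψ.symm (a ⊗ₜ c)))
    (hYX : ∀ c a, T (inr k X Y c ⊗ₜ inl k X Y a) =
      TensorProduct.map (inl k X Y) (inr k X Y) (ψ (c ⊗ₜ a)) +
        δ • (inr k X Y c ⊗ₜ inl k X Y a)) :
    T = glue δ R R' ψ := by
  apply tensorProduct_prod_hom_ext
  · rw [glue_comp_map_inl_inl]
    exact TensorProduct.ext' hXX
  · rw [glue_comp_map_inl_inr]
    exact TensorProduct.ext' hXY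
  · rw [glue_comp_map_inr_inl]
    exact TensorProduct.ext' hYX
  · rw [glue_comp_map_inr_inr]
    exact TensorProduct.ext' hYY

theorem glue_comp_self (hR : R ∘ₗ R = δ • R + LinearMap.id)
    (hR' : R' ∘ₗ R' = δ • R' + LinearMap.id) :
    glue δ R R' ψ ∘ₗ glue δ R R' ψ = δ • glue δ R R' ψ + LinearMap.id := by
  apply tensorProduct_prod_hom_ext
  · simp only [comp_assoc, add_comp, smul_comp, id_comp, glue_comp_map_inl_inl]
    rw [← comp_assoc, glue_comp_map_inl_inl, comp_assoc, hR, comp_add, comp_smul, comp_id]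
  · simp only [comp_assoc, add_comp, smul_comp, id_comp, glue_comp_map_inl_inr]
    rw [← comp_assoc, glue_comp_map_inr_inl, add_comp, comp_assoc, LinearEquiv.comp_symm, comp_id,
      smul_comp, add_comm]
  · simp only [comp_assoc, add_comp, smul_comp, id_comp, comp_add, comp_smul,
      glue_comp_map_inr_inl]
    rw [← comp_assoc, glue_comp_map_inl_inr, comp_assoc, LinearEquiv.symm_comp, comp_id, add_comm]
  · simp only [comp_assoc, add_comp, smul_comp, id_comp, glue_comp_map_inr_inr]
    rw [← comp_assoc, glue_comp_map_inr_inr, comp_assoc, hR', comp_add, comp_smul, comp_id]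

variable (δ R R' ψ) in
theorem lTensor_glue_comp_map_inl_inr {Z W : Type*} [AddCommGroup Z] [Module k Z] [AddCommGroup W]
    [Module k W] (c : Z →ₗ[k] W) :
    (glue δ R R' ψ).lTensor W ∘ₗ TensorProduct.map c (TensorProduct.map (inl k X Y) (inr k X Y)) ∘ₗ
        ψ.toLinearMap.lTensor Z =
      TensorProduct.map c (TensorProduct.map (inr k X Y) (inl k X Y)) := by
  rw [← comp_assoc, lTensor_comp_map_map (glue_comp_map_inl_inr ..), comp_assoc, ← lTensor_comp,
    LinearEquiv.symm_comp, lTensor_id, comp_id]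

variable (δ R R' ψ) in
theorem rTensorAssoc_glue_comp_map_inl_inr {Z W : Type*} [AddCommGroup Z] [Module k Z]
    [AddCommGroup W] [Module k W] (c : Z →ₗ[k] W) :
    rTensorAssoc W (glue δ R R' ψ) ∘ₗ
      TensorProduct.map (inl k X Y) (TensorProduct.map (inr k X Y) c) ∘ₗ
        rTensorAssoc Z ψ.toLinearMap =
      TensorProduct.map (inr k X Y) (TensorProduct.map (inl k X Y) c) := by
  rw [← comp_assoc, rTensorAssoc_comp_map (glue_comp_map_inl_inr ..), comp_assoc,
    ← rTensorAssoc_comp, LinearEquiv.symm_comp, rTensorAssoc_id, comp_id]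

theorem IsBraided.braid_comp_map_map {V : Type*} [AddCommGroup V] [Module k V]
    {T : V ⊗[k] V →ₗ[k] V ⊗[k] V} {S : M ⊗[k] M →ₗ[k] M ⊗[k] M} (hS : IsBraided S) {i : M →ₗ[k] V}
    (h : T ∘ₗ TensorProduct.map i i = TensorProduct.map i i ∘ₗ S) :
    (rTensorAssoc V T ∘ₗ T.lTensor V ∘ₗ rTensorAssoc V T) ∘ₗ
        TensorProduct.map i (TensorProduct.map i i) =
      (T.lTensor V ∘ₗ rTensorAssoc V T ∘ₗ T.lTensor V) ∘ₗ
        TensorProduct.map i (TensorProduct.map i i) := by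
  have h₁₂ (t) := congr($(rTensorAssoc_comp_map h i) t)
  have h₂₃ (t) := congr($(lTensor_comp_map_map h i) t)
  simp only [comp_apply] at h₁₂ h₂₃
  refine LinearMap.ext fun t ↦ ?_
  simp only [comp_apply, h₁₂, h₂₃]
  exact congr(TensorProduct.map i (TensorProduct.map i i) ($hS t))

theorem isBraided_glue (hR : IsBraided R) (hR' : IsBraided R')
    (hRR : R ∘ₗ R = δ • R + LinearMap.id) (hRR' : R' ∘ₗ R' = δ • R' + LinearMap.id)
    (hψR : rTensorAssoc Y R ∘ₗ ψ.toLinearMap.lTensor X ∘ₗ rTensorAssoc X ψ.toLinearMap =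
      ψ.toLinearMap.lTensor X ∘ₗ rTensorAssoc X ψ.toLinearMap ∘ₗ R.lTensor Y)
    (hψR' : R'.lTensor X ∘ₗ rTensorAssoc Y ψ.toLinearMap ∘ₗ ψ.toLinearMap.lTensor Y =
      rTensorAssoc Y ψ.toLinearMap ∘ₗ ψ.toLinearMap.lTensor Y ∘ₗ rTensorAssoc X R') :
    IsBraided (glue δ R R' ψ) := by
  have hT := glue_comp_self (ψ := ψ) hRR hRR'
  have hXX := glue_comp_map_inl_inl δ R R' ψ
  have hYY := glue_comp_map_inr_inr δ R R' ψ
  obtain ⟨hXXY, hXYX, hYXX⟩ := braid_comp_of_chain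
    (rTensorAssoc_comp_self hT) (lTensor_comp_self hT)
    (lTensor_surjective X ψ.surjective) (rTensorAssoc_surjective ψ.surjective)
    (rTensorAssoc_comp_map hXX (inr k X Y)) (lTensor_glue_comp_map_inl_inr δ R R' ψ (inl k X Y))
    (rTensorAssoc_glue_comp_map_inl_inr δ R R' ψ (inl k X Y))
    (lTensor_comp_map_map hXX (inr k X Y)) hψR
  obtain ⟨hXYY, hYXY, hYYX⟩ := braid_comp_of_chain
    (lTensor_comp_self hT) (rTensorAssoc_comp_self hT)
    (rTensorAssoc_surjective ψ.surjective) (lTensor_surjective Y ψ.surjective)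
    (lTensor_comp_map_map hYY (inl k X Y))
    (rTensorAssoc_glue_comp_map_inl_inr δ R R' ψ (inr k X Y))
    (lTensor_glue_comp_map_inl_inr δ R R' ψ (inr k X Y))
    (rTensorAssoc_comp_map hYY (inl k X Y)) hψR'
  have hXXX := hR.braid_comp_map_map hXX
  have hYYY := hR'.braid_comp_map_map hYY
  unfold IsBraided
  ext a b c
  exacts [congr($hXXX (a ⊗ₜ (b ⊗ₜ c))), congr($hXXY (a ⊗ₜ (b ⊗ₜ c))),
    congr($hXYX (a ⊗ₜ (b ⊗ₜ c))), congr($hXYY.symm (a ⊗ₜ (b ⊗ₜ c))),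
    congr($hYXX (a ⊗ₜ (b ⊗ₜ c))), congr($hYXY.symm (a ⊗ₜ (b ⊗ₜ c))),
    congr($hYYX.symm (a ⊗ₜ (b ⊗ₜ c))), congr($hYYY (a ⊗ₜ (b ⊗ₜ c)))]

end Glue

section Algebra

variable {k A : Type*} [CommRing k] [Ring A] [Algebra k A]

variable (A) in
/-- The map `a ↦ q⁻¹ a ⊗ 1 + q 1 ⊗ a`, through which `algebraHecke` factors. -/
def weightedUnit (q : kˣ) : A →ₗ[k] A ⊗[k] A :=
  (↑q⁻¹ : k) • (mk k A A).flip 1 + (q : k) • mk k A A 1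

variable (A) in
/-- The Hecke operator `R` on `A ⊗ A` of an algebra `A`. -/
def algebraHecke (q : kˣ) : A ⊗[k] A →ₗ[k] A ⊗[k] A :=
  weightedUnit A q ∘ₗ mul' k A - (↑q⁻¹ : k) • LinearMap.id

theorem algebraHecke_tmul (q : kˣ) (a b : A) : algebraHecke A q (a ⊗ₜ b) =
    (↑q⁻¹ : k) • ((a * b) ⊗ₜ 1) + (q : k) • (1 ⊗ₜ (a * b)) - (↑q⁻¹ : k) • (a ⊗ₜ b) := by
  simp [algebraHecke, weightedUnit]

theorem eq_algebraHecke {q : kˣ} {R : A ⊗[k] A →ₗ[k] A ⊗[k] A}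
    (hR : ∀ a b, R (a ⊗ₜ b) =
      (↑q⁻¹ : k) • ((a * b) ⊗ₜ 1) + (q : k) • (1 ⊗ₜ (a * b)) - (↑q⁻¹ : k) • (a ⊗ₜ b)) :
    R = algebraHecke A q :=
  TensorProduct.ext' fun a b ↦ (hR a b).trans (algebraHecke_tmul q a b).symm

theorem mul'_comp_weightedUnit (q : kˣ) :
    mul' k A ∘ₗ weightedUnit A q = ((q : k) + ↑q⁻¹) • LinearMap.id := by
  ext a
  simp [weightedUnit, add_smul, add_comm]

theorem algebraHecke_comp_self (q : kˣ) :
    algebraHecke A q ∘ₗ algebraHecke A q =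
      ((q : k) - ↑q⁻¹) • algebraHecke A q + LinearMap.id :=
  sub_smul_id_comp_self (mul'_comp_weightedUnit q)

theorem isBraided_algebraHecke (q : kˣ) : IsBraided (algebraHecke A q) := by
  unfold IsBraided
  ext a b c
  simp only [AlgebraTensorModule.curry_apply, TensorProduct.curry_apply, coe_restrictScalars,
    comp_apply, lTensor_tmul, rTensorAssoc_tmul, algebraHecke_tmul, map_add, map_sub, map_smul,
    add_tmul, sub_tmul, tmul_add, tmul_sub, ← smul_tmul', tmul_smul, assoc_tmul, mul_one, one_mul,
    mul_assoc]
  match_scalars <;> grind [q.mul_inv]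

end Algebra

section Coalgebra

open Coalgebra

variable {k C : Type*} [CommRing k] [AddCommGroup C] [Module k C] [Coalgebra k C]

variable (C) in
/-- The map `c ⊗ d ↦ q⁻¹ ε(c) d + q ε(d) c`, through which `coalgebraHecke` factors. It is dual to
`weightedUnit`. -/
def weightedCounit (q : kˣ) : C ⊗[k] C →ₗ[k] C :=
  (↑q⁻¹ : k) • (TensorProduct.lid k C).toLinearMap ∘ₗ counit.rTensor C +
    (q : k) • (TensorProduct.rid k C).toLinearMap ∘ₗ counit.lTensor C

variable (C) in
/-- The Hecke operator `R'` on `C ⊗ C` of a coalgebra `C`. -/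
def coalgebraHecke (q : kˣ) : C ⊗[k] C →ₗ[k] C ⊗[k] C :=
  comul ∘ₗ weightedCounit C q - (↑q⁻¹ : k) • LinearMap.id

theorem weightedCounit_tmul (q : kˣ) (c d : C) :
    weightedCounit C q (c ⊗ₜ d) =
      ((↑q⁻¹ : k) * counit (R := k) c) • d + ((q : k) * counit (R := k) d) • c := by
  simp [weightedCounit, mul_smul]

theorem coalgebraHecke_tmul (q : kˣ) (c d : C) : coalgebraHecke C q (c ⊗ₜ d) =
    ((↑q⁻¹ : k) * counit (R := k) c) • comul (R := k) d +
      ((q : k) * counit (R := k) d) • comul (R := k) c - (↑q⁻¹ : k) • (c ⊗ₜ d) := by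
  simp [coalgebraHecke, weightedCounit_tmul]

theorem eq_coalgebraHecke {q : kˣ} {R' : C ⊗[k] C →ₗ[k] C ⊗[k] C}
    (hR' : ∀ c d, R' (c ⊗ₜ d) =
      ((↑q⁻¹ : k) * counit (R := k) c) • comul (R := k) d +
        ((q : k) * counit (R := k) d) • comul (R := k) c - (↑q⁻¹ : k) • (c ⊗ₜ d)) :
    R' = coalgebraHecke C q :=
  TensorProduct.ext' fun c d ↦ (hR' c d).trans (coalgebraHecke_tmul q c d).symm

theorem weightedCounit_comp_comul (q : kˣ) :
    weightedCounit C q ∘ₗ comul = ((q : k) + ↑q⁻¹) • LinearMap.id := by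
  ext c
  simp [weightedCounit, add_smul, add_comm]

theorem coalgebraHecke_comp_self (q : kˣ) :
    coalgebraHecke C q ∘ₗ coalgebraHecke C q =
      ((q : k) - ↑q⁻¹) • coalgebraHecke C q + LinearMap.id :=
  sub_smul_id_comp_self (weightedCounit_comp_comul q)

theorem coalgebraHecke_comp_comul (q : kˣ) :
    coalgebraHecke C q ∘ₗ comul = (q : k) • comul := by
  rw [coalgebraHecke, sub_comp, comp_assoc, weightedCounit_comp_comul, comp_smul, comp_id,
    smul_comp, id_comp, add_smul, add_sub_cancel_right]

theorem rTensorAssoc_coalgebraHecke_tmul_comul (q : kˣ) (c d : C) :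
    rTensorAssoc C (coalgebraHecke C q) (c ⊗ₜ comul (R := k) d) =
      ((↑q⁻¹ : k) * counit (R := k) c) • comul.lTensor C (comul (R := k) d) +
        (q : k) • TensorProduct.assoc k C C C (comul (R := k) c ⊗ₜ d) -
          (↑q⁻¹ : k) • (c ⊗ₜ comul (R := k) d) := by
  have htmul (t : C ⊗[k] C) : rTensorAssoc C (coalgebraHecke C q) (c ⊗ₜ t) =
      ((↑q⁻¹ : k) * counit (R := k) c) • TensorProduct.assoc k C C C (comul.rTensor C t) +
        (q : k) • TensorProduct.assoc k C C C
          (comul (R := k) c ⊗ₜ TensorProduct.lid k C (counit.rTensor C t)) -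
          (↑q⁻¹ : k) • (c ⊗ₜ t) := by
    induction t with
    | zero => simp
    | tmul x y =>
      simp [coalgebraHecke_tmul, add_tmul, sub_tmul, ← smul_tmul', mul_smul]
    | add x y hx hy =>
      simp only [map_add, tmul_add, hx, hy]
      module
  rw [htmul, coassoc_apply, rTensor_counit_comul, lid_tmul, one_smul]

theorem lTensor_coalgebraHecke_assoc_comul_tmul (q : kˣ) (c d : C) :
    (coalgebraHecke C q).lTensor C (TensorProduct.assoc k C C C (comul (R := k) c ⊗ₜ d)) =
      (↑q⁻¹ : k) • (c ⊗ₜ comul (R := k) d) +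
        ((q : k) * counit (R := k) d) • comul.lTensor C (comul (R := k) c) -
          (↑q⁻¹ : k) • TensorProduct.assoc k C C C (comul (R := k) c ⊗ₜ d) := by
  have htmul (t : C ⊗[k] C) :
      (coalgebraHecke C q).lTensor C (TensorProduct.assoc k C C C (t ⊗ₜ d)) =
        (↑q⁻¹ : k) • (TensorProduct.rid k C (counit.lTensor C t) ⊗ₜ comul (R := k) d) +
          ((q : k) * counit (R := k) d) • comul.lTensor C t -
            (↑q⁻¹ : k) • TensorProduct.assoc k C C C (t ⊗ₜ d) := by
    induction t with
    | zero => simp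
    | tmul x y =>
      simp [coalgebraHecke_tmul, tmul_add, tmul_sub, mul_smul, ← smul_tmul']
    | add x y hx hy =>
      simp only [map_add, add_tmul, hx, hy]
      module
  rw [htmul, lTensor_counit_comul, rid_tmul, one_smul]

theorem lTensor_coalgebraHecke_lTensor_comul_comul (q : kˣ) (c : C) :
    (coalgebraHecke C q).lTensor C (comul.lTensor C (comul (R := k) c)) =
      (q : k) • comul.lTensor C (comul (R := k) c) := by
  rw [← lTensor_comp_apply, coalgebraHecke_comp_comul, lTensor_smul, LinearMap.smul_apply]

theorem rTensorAssoc_coalgebraHecke_lTensor_comul_comul (q : kˣ) (c : C) :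
    rTensorAssoc C (coalgebraHecke C q) (comul.lTensor C (comul (R := k) c)) =
      (q : k) • comul.lTensor C (comul (R := k) c) := by
  rw [← coassoc_apply, rTensorAssoc, comp_apply, comp_apply, LinearEquiv.coe_coe,
    LinearEquiv.coe_coe, LinearEquiv.symm_apply_apply, ← rTensor_comp_apply,
    coalgebraHecke_comp_comul, rTensor_smul, LinearMap.smul_apply, map_smul]

theorem isBraided_coalgebraHecke (q : kˣ) : IsBraided (coalgebraHecke C q) := by
  have hcomul (c : C) := congr($(coalgebraHecke_comp_comul q) c)
  simp only [comp_apply, LinearMap.smul_apply] at hcomul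
  unfold IsBraided
  ext a b c
  simp only [AlgebraTensorModule.curry_apply, TensorProduct.curry_apply, coe_restrictScalars,
    comp_apply, lTensor_tmul, rTensorAssoc_tmul, rTensorAssoc_assoc_tmul, coalgebraHecke_tmul,
    map_add, map_sub, map_smul, add_tmul, sub_tmul, tmul_add, tmul_sub, ← smul_tmul', tmul_smul,
    assoc_tmul, hcomul, rTensorAssoc_coalgebraHecke_tmul_comul,
    lTensor_coalgebraHecke_assoc_comul_tmul, lTensor_coalgebraHecke_lTensor_comul_comul,
    rTensorAssoc_coalgebraHecke_lTensor_comul_comul]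
  match_scalars <;> grind [q.mul_inv]

end Coalgebra

section Entwining

open Coalgebra

/-- `IsEntwining` over a commutative ring, with the axioms for `μ`, `Δ` and `ε` stated as equalities
of maps. -/
structure IsEntwiningMap {k A C : Type*} [CommRing k] [Ring A] [Algebra k A] [AddCommGroup C]
    [Module k C] [Coalgebra k C] (ψ : C ⊗[k] A →ₗ[k] A ⊗[k] C) : Prop where
  comp_lTensor_mul' : ψ ∘ₗ (mul' k A).lTensor C = (mul' k A).rTensor C ∘ₗ
    (TensorProduct.assoc k A A C).symm.toLinearMap ∘ₗ ψ.lTensor A ∘ₗ rTensorAssoc A ψ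
  apply_tmul_one (c : C) : ψ (c ⊗ₜ 1) = 1 ⊗ₜ c
  lTensor_comul_comp : comul.lTensor A ∘ₗ ψ = rTensorAssoc C ψ ∘ₗ ψ.lTensor C ∘ₗ
    (TensorProduct.assoc k C C A).toLinearMap ∘ₗ comul.rTensor A
  lTensor_counit_comp : (TensorProduct.rid k A).toLinearMap ∘ₗ counit.lTensor A ∘ₗ ψ =
    (TensorProduct.lid k A).toLinearMap ∘ₗ counit.rTensor A

theorem IsEntwining.isEntwiningMap {k A C : Type*} [Field k] [Ring A] [Algebra k A]
    [AddCommGroup C] [Module k C] [Coalgebra k C] {ψ : C ⊗[k] A →ₗ[k] A ⊗[k] C}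
    (hψ : IsEntwining k ψ) : IsEntwiningMap ψ where
  comp_lTensor_mul' := by
    ext c a b
    simp [hψ.1]
  apply_tmul_one := hψ.2.2.1
  lTensor_comul_comp := by
    ext c a
    simp [hψ.2.1, rTensorAssoc]
  lTensor_counit_comp := by
    ext c a
    simp [hψ.2.2.2]

variable {k A C : Type*} [CommRing k] [Ring A] [Algebra k A] [AddCommGroup C] [Module k C]
  [Coalgebra k C] {ψ : C ⊗[k] A →ₗ[k] A ⊗[k] C}

theorem IsEntwiningMap.comp_lTensor_weightedUnit (hψ : IsEntwiningMap ψ) (q : kˣ) :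
    ψ.lTensor A ∘ₗ rTensorAssoc A ψ ∘ₗ (weightedUnit A q).lTensor C =
      (TensorProduct.assoc k A A C).toLinearMap ∘ₗ (weightedUnit A q).rTensor C ∘ₗ ψ := by
  have hright (t : A ⊗[k] C) : ψ.lTensor A (TensorProduct.assoc k A C A (t ⊗ₜ 1)) =
      TensorProduct.assoc k A A C (((TensorProduct.mk k A A).flip 1).rTensor C t) := by
    induction t with
    | zero => simp
    | tmul a c => simp [hψ.apply_tmul_one]
    | add t u ht hu => simp only [add_tmul, map_add, ht, hu]
  have hleft (t : A ⊗[k] C) :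
      1 ⊗ₜ t = TensorProduct.assoc k A A C ((TensorProduct.mk k A A 1).rTensor C t) := by
    induction t with
    | zero => simp
    | tmul a c => simp
    | add t u ht hu => simp only [tmul_add, map_add, ht, hu]
  ext c a
  simp [weightedUnit, hψ.apply_tmul_one, rTensor_add, rTensor_smul, hright, hleft]

theorem IsEntwiningMap.rTensorAssoc_algebraHecke_comp (hψ : IsEntwiningMap ψ) (q : kˣ) :
    rTensorAssoc C (algebraHecke A q) ∘ₗ ψ.lTensor A ∘ₗ rTensorAssoc A ψ =
      ψ.lTensor A ∘ₗ rTensorAssoc A ψ ∘ₗ (algebraHecke A q).lTensor C := by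
  set Ψ := ψ.lTensor A ∘ₗ rTensorAssoc A ψ with hΨ
  have hR : rTensorAssoc C (algebraHecke A q) =
      ((TensorProduct.assoc k A A C).toLinearMap ∘ₗ (weightedUnit A q).rTensor C) ∘ₗ
        (mul' k A).rTensor C ∘ₗ (TensorProduct.assoc k A A C).symm.toLinearMap -
          (↑q⁻¹ : k) • LinearMap.id := by
    ext
    simp [algebraHecke, sub_tmul, ← smul_tmul']
  calc rTensorAssoc C (algebraHecke A q) ∘ₗ Ψ
    _ = ((TensorProduct.assoc k A A C).toLinearMap ∘ₗ (weightedUnit A q).rTensor C) ∘ₗ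
          ψ ∘ₗ (mul' k A).lTensor C - (↑q⁻¹ : k) • Ψ := by
        rw [hR, sub_comp, smul_comp, id_comp, hψ.comp_lTensor_mul']
        simp only [comp_assoc, hΨ]
    _ = Ψ ∘ₗ (weightedUnit A q).lTensor C ∘ₗ (mul' k A).lTensor C - (↑q⁻¹ : k) • Ψ := by
        rw [← comp_assoc, comp_assoc ψ, ← hψ.comp_lTensor_weightedUnit]
        simp only [comp_assoc, hΨ]
    _ = Ψ ∘ₗ (algebraHecke A q).lTensor C := by
        rw [algebraHecke, lTensor_sub, lTensor_smul, lTensor_id, lTensor_comp, comp_sub, comp_smul,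
          comp_id]

theorem IsEntwiningMap.lid_counit_rTensorAssoc_tmul (hψ : IsEntwiningMap ψ) (c : C)
    (t : A ⊗[k] C) :
    ((TensorProduct.lid k C).toLinearMap ∘ₗ counit.rTensor C).lTensor A
      (rTensorAssoc C ψ (c ⊗ₜ t)) = counit (R := k) c • t := by
  have hcounit (a : A) : TensorProduct.rid k A (counit.lTensor A (ψ (c ⊗ₜ a))) =
      counit (R := k) c • a := by
    simpa using congr($hψ.lTensor_counit_comp (c ⊗ₜ a))
  have hassoc (u : A ⊗[k] C) (d : C) :
      ((TensorProduct.lid k C).toLinearMap ∘ₗ counit.rTensor C).lTensor A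
        (TensorProduct.assoc k A C C (u ⊗ₜ d)) =
          TensorProduct.rid k A (counit.lTensor A u) ⊗ₜ d := by
    induction u with
    | zero => simp
    | tmul a e => simp [smul_tmul]
    | add u v hu hv => simp only [map_add, add_tmul, hu, hv]
  induction t with
  | zero => simp
  | tmul a d => rw [rTensorAssoc_tmul, hassoc, hcounit, smul_tmul']
  | add t u ht hu => simp only [map_add, tmul_add, ht, hu, smul_add]

theorem IsEntwiningMap.lTensor_weightedCounit_comp (hψ : IsEntwiningMap ψ) (q : kˣ) :
    (weightedCounit C q).lTensor A ∘ₗ rTensorAssoc C ψ ∘ₗ ψ.lTensor C =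
      ψ ∘ₗ (weightedCounit C q).rTensor A ∘ₗ (TensorProduct.assoc k C C A).symm.toLinearMap := by
  have hcounit (t : C ⊗[k] A) : TensorProduct.rid k A (counit.lTensor A (ψ t)) =
      TensorProduct.lid k A (counit.rTensor A t) := congr($hψ.lTensor_counit_comp t)
  have hright (t : C ⊗[k] (A ⊗[k] C)) := congr($(lTensor_rid_comp_rTensorAssoc ψ counit) t)
  simp only [comp_apply] at hright
  ext c d a
  simp [weightedCounit, lTensor_add, lTensor_smul, hψ.lid_counit_rTensorAssoc_tmul, hright, hcounit,
    ← smul_tmul']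

theorem IsEntwiningMap.lTensor_coalgebraHecke_comp (hψ : IsEntwiningMap ψ) (q : kˣ) :
    (coalgebraHecke C q).lTensor A ∘ₗ rTensorAssoc C ψ ∘ₗ ψ.lTensor C =
      rTensorAssoc C ψ ∘ₗ ψ.lTensor C ∘ₗ rTensorAssoc A (coalgebraHecke C q) := by
  set Ψ := rTensorAssoc C ψ ∘ₗ ψ.lTensor C with hΨ
  have hR : rTensorAssoc A (coalgebraHecke C q) =
      ((TensorProduct.assoc k C C A).toLinearMap ∘ₗ comul.rTensor A) ∘ₗ
        (weightedCounit C q).rTensor A ∘ₗ (TensorProduct.assoc k C C A).symm.toLinearMap -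
          (↑q⁻¹ : k) • LinearMap.id := by
    ext
    simp [coalgebraHecke, sub_tmul, ← smul_tmul']
  calc (coalgebraHecke C q).lTensor A ∘ₗ Ψ
    _ = comul.lTensor A ∘ₗ (weightedCounit C q).lTensor A ∘ₗ Ψ - (↑q⁻¹ : k) • Ψ := by
        rw [coalgebraHecke, lTensor_sub, lTensor_smul, lTensor_id, lTensor_comp, sub_comp,
          smul_comp, id_comp, comp_assoc]
    _ = comul.lTensor A ∘ₗ ψ ∘ₗ (weightedCounit C q).rTensor A ∘ₗ
          (TensorProduct.assoc k C C A).symm.toLinearMap - (↑q⁻¹ : k) • Ψ := by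
        rw [hψ.lTensor_weightedCounit_comp]
    _ = Ψ ∘ₗ rTensorAssoc A (coalgebraHecke C q) := by
        rw [hR, comp_sub, comp_smul, comp_id, ← comp_assoc, hψ.lTensor_comul_comp]
        simp only [comp_assoc, hΨ]

end Entwining

theorem stmt16_general {k A C : Type*} [CommRing k] [Ring A] [Algebra k A] [AddCommGroup C]
    [Module k C] [Coalgebra k C] (q : kˣ) (ψ : C ⊗[k] A ≃ₗ[k] A ⊗[k] C)
    (hψ : IsEntwiningMap ψ.toLinearMap) :
    IsHeckeOperator q
      (glue ((q : k) - ↑q⁻¹) (algebraHecke A q) (coalgebraHecke C q) ψ) :=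
  .of_isBraided
    (isBraided_glue (isBraided_algebraHecke q) (isBraided_coalgebraHecke q)
      (algebraHecke_comp_self q) (coalgebraHecke_comp_self q)
      (hψ.rTensorAssoc_algebraHecke_comp q) (hψ.lTensor_coalgebraHecke_comp q))
    (glue_comp_self (algebraHecke_comp_self q) (coalgebraHecke_comp_self q))

/-- Let `(A,C)_ψ` be an entwining structure with `ψ` bijective (inverse `φ`)
and `q ∈ k` nonzero. Define `R` on `A⊗A` by `R(a⊗b) = q⁻¹ab⊗1 + q·1⊗ab − q⁻¹a⊗b`, `R'`
on `C⊗C` by `R'(c⊗d) = q⁻¹ε(c)Δ(d) + qε(d)Δ(c) − q⁻¹c⊗d`, and `T = R ⊕_ψ R'` on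
`(A⊕C)⊗(A⊕C)` blockwise: `R` on `A⊗A`, `R'` on `C⊗C`, `ψ⁻¹` on `A⊗C`, and
`ψ + (q − q⁻¹)·id` on `C⊗A`. Then `T` is a `q`-Hecke operator: it is invertible,
satisfies the braid equation, and `(T + q⁻¹)(T − q) = 0`. -/
theorem stmt16 (k A C : Type*) [Field k] [Ring A] [Algebra k A]
    [AddCommGroup C] [Module k C] [Coalgebra k C]
    (q : k) (hq : q ≠ 0)
    (ψ : C ⊗[k] A →ₗ[k] A ⊗[k] C) (hψ : IsEntwining k ψ)
    (φ : A ⊗[k] C →ₗ[k] C ⊗[k] A)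
    (hφ1 : ψ ∘ₗ φ = LinearMap.id) (hφ2 : φ ∘ₗ ψ = LinearMap.id)
    (R : A ⊗[k] A →ₗ[k] A ⊗[k] A)
    (hR : ∀ a b : A, R (a ⊗ₜ[k] b) =
      q⁻¹ • ((a * b) ⊗ₜ[k] (1 : A)) + q • ((1 : A) ⊗ₜ[k] (a * b)) - q⁻¹ • (a ⊗ₜ[k] b))
    (R' : C ⊗[k] C →ₗ[k] C ⊗[k] C)
    (hR' : ∀ c d : C, R' (c ⊗ₜ[k] d) =
      (q⁻¹ * Coalgebra.counit (R := k) c) • Coalgebra.comul (R := k) d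
      + (q * Coalgebra.counit (R := k) d) • Coalgebra.comul (R := k) c
      - q⁻¹ • (c ⊗ₜ[k] d))
    -- the glued operator T = R ⊕_ψ R' on (A ⊕ C) ⊗ (A ⊕ C), defined blockwise
    (T : (A × C) ⊗[k] (A × C) →ₗ[k] (A × C) ⊗[k] (A × C))
    (hTAA : ∀ a b : A, T ((LinearMap.inl k A C a) ⊗ₜ[k] (LinearMap.inl k A C b)) =
      (TensorProduct.map (LinearMap.inl k A C) (LinearMap.inl k A C)) (R (a ⊗ₜ[k] b)))
    (hTCC : ∀ c d : C, T ((LinearMap.inr k A C c) ⊗ₜ[k] (LinearMap.inr k A C d)) =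
      (TensorProduct.map (LinearMap.inr k A C) (LinearMap.inr k A C)) (R' (c ⊗ₜ[k] d)))
    (hTAC : ∀ (a : A) (c : C), T ((LinearMap.inl k A C a) ⊗ₜ[k] (LinearMap.inr k A C c)) =
      (TensorProduct.map (LinearMap.inr k A C) (LinearMap.inl k A C)) (φ (a ⊗ₜ[k] c)))
    (hTCA : ∀ (c : C) (a : A), T ((LinearMap.inr k A C c) ⊗ₜ[k] (LinearMap.inl k A C a)) =
      (TensorProduct.map (LinearMap.inl k A C) (LinearMap.inr k A C)) (ψ (c ⊗ₜ[k] a))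
        + (q - q⁻¹) • ((LinearMap.inr k A C c) ⊗ₜ[k] (LinearMap.inl k A C a)))
    -- T₁₂ acting as T on the first two tensor factors of (A⊕C)⊗(A⊕C)⊗(A⊕C)
    (T12 : (A × C) ⊗[k] ((A × C) ⊗[k] (A × C)) →ₗ[k] (A × C) ⊗[k] ((A × C) ⊗[k] (A × C)))
    (hT12 : ∀ u v w : A × C, T12 (u ⊗ₜ[k] (v ⊗ₜ[k] w)) =
      ((TensorProduct.mk k (A × C) (A × C)).flip w).lTensor (A × C) (T (u ⊗ₜ[k] v))) :
    Function.Bijective T ∧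
    T12 ∘ₗ T.lTensor (A × C) ∘ₗ T12 = T.lTensor (A × C) ∘ₗ T12 ∘ₗ T.lTensor (A × C) ∧
    (T + q⁻¹ • LinearMap.id) ∘ₗ (T - q • LinearMap.id) = 0 := by
  rw [eq_rTensorAssoc hT12, eq_glue (ψ := .ofLinearMap ψ φ hφ1 hφ2) hTAA hTCC hTAC hTCA,
    eq_algebraHecke (q := .mk0 q hq) hR, eq_coalgebraHecke (q := .mk0 q hq) hR']
  exact stmt16_general (.mk0 q hq) (.ofLinearMap ψ φ hφ1 hφ2) hψ.isEntwiningMap
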